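/- Asymptotically almost no lambda term is strongly normalizing: the sequence n ↦ (number of strongly β-normalizing lambda terms of size n) / L n converges to 0 as n → ∞. -/

import Mathlib

/-- Lambda terms with de Bruijn indices. -/
inductive Term : Type
  | var : ℕ → Term
  | app : Term → Term → Term
  | abs : Term → Term

namespace Term

/-- Natural size: every operator (zero, successor, application, abstraction) has size 1. -/
def size : Term → ℕ
  | var k => k + 1
  | app M N => M.size + N.size + 1
  | abs M => M.size + 1

end Term

/-- `L n` is the number of lambda terms of size `n`. -/
noncomputable def L (n : ℕ) : ℕ := Nat.card {t : Term // t.size = n}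


namespace Term

/-- `lift M d` adds 1 to every free de Bruijn index of `M` that is `≥ d`. -/
def lift : Term → ℕ → Term
  | .var k, d => if k < d then .var k else .var (k + 1)
  | .app M N, d => .app (M.lift d) (N.lift d)
  | .abs M, d => .abs (M.lift (d + 1))

/-- `subst M k N` replaces the index `k` in `M` by the appropriately lifted `N`
and decrements the free indices greater than `k`. -/
def subst : Term → ℕ → Term → Term
  | .var i, k, N => if i = k then (fun M => Term.lift M 0)^[k] N
                    else if k < i then .var (i - 1) else .var i
  | .app M₁ M₂, k, N => .app (M₁.subst k N) (M₂.subst k N)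
  | .abs M, k, N => .abs (M.subst (k + 1) N)

/-- One-step β-reduction. -/
inductive Beta : Term → Term → Prop
  | beta (M N : Term) : Beta (.app (.abs M) N) (M.subst 0 N)
  | appLeft {M M' : Term} (N : Term) : Beta M M' → Beta (.app M N) (.app M' N)
  | appRight (M : Term) {N N' : Term} : Beta N N' → Beta (.app M N) (.app M N')
  | abs {M M' : Term} : Beta M M' → Beta (.abs M) (.abs M')

/-- A term is strongly normalizing if there is no infinite β-reduction sequence
starting from it, i.e. it is accessible for the reversed one-step reduction. -/
def StronglyNormalizing (t : Term) : Prop := Acc (fun a b => Beta b a) t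

end Term

/-! The generating function `F` of lambda terms satisfies `F = Φ x F` with
`Φ x y = x / (1 - x) + (x y² + x y)`. This quadratic in `F` has discriminant zero at the point `ρ`
with `(1 - ρ)³ = 4 ρ²`, where it has the double root `τ = (1 - ρ) / (2 ρ)`, and no real root for
`ρ < x < 1`. So the series diverges beyond `ρ`, and because application makes the counting sequence
supermultiplicative, `L n` is at least a constant times `y⁻ⁿ` for every `y > ρ`.

Forbidding a fixed subterm `s` lowers the right-hand side by `x ^ |s|`. At `ρ` this leaves room
below the fixed point `τ`, and by continuity the room persists at some `x > ρ`, where the partial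
sums of the generating function of the terms avoiding `s` therefore stay below `τ`. Hence these
terms are exponentially rare. The theorem is the case `s = Ω`, since no term containing `Ω` is
strongly normalizing. -/

open Filter Topology

theorem not_acc_of_rel_self {α : Type*} {r : α → α → Prop} {a : α} (h : r a a) : ¬ Acc r a := by
  intro hacc
  induction hacc with
  | intro a _ ih => exact ih a h h

theorem hasSum_mul_of_nonneg {ι κ : Type*} {f : ι → ℝ} {g : κ → ℝ} {a b : ℝ} (hf : HasSum f a)
    (hg : HasSum g b) (hf_nonneg : 0 ≤ f) (hg_nonneg : 0 ≤ g) :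
    HasSum (fun p : ι × κ => f p.1 * g p.2) (a * b) :=
  hf.mul hg (hf.summable.mul_of_nonneg hg.summable hf_nonneg hg_nonneg)

theorem pow_le_mul_pow_of_mul_le {a : ℕ → ℝ} (ha_one : ∀ n, 1 ≤ a (n + 1))
    (ha_mul : ∀ m n, a m * a n ≤ a (m + n + 1)) {y : ℝ} (hy_pos : 0 < y) (hy_le : y ≤ 1) {m : ℕ}
    (hm : 1 ≤ a m * y ^ (m + 1)) (n : ℕ) : y ^ (m + 1) ≤ a (n + 1) * y ^ (n + 1) := by
  induction n using Nat.strong_induction_on with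
  | _ n ih =>
    rcases le_or_gt n m with hnm | hmn
    · calc y ^ (m + 1) ≤ y ^ (n + 1) := pow_le_pow_of_le_one hy_pos.le hy_le (by lia)
        _ ≤ a (n + 1) * y ^ (n + 1) := le_mul_of_one_le_left (by positivity) (ha_one n)
    · obtain ⟨k, rfl⟩ : ∃ k, n = m + (k + 1) := ⟨n - m - 1, by lia⟩
      have ih_k : y ^ (m + 1) ≤ a (k + 1) * y ^ (k + 1) := ih k (by lia)
      calc y ^ (m + 1) ≤ a (k + 1) * y ^ (k + 1) := ih_k
        _ ≤ (a m * y ^ (m + 1)) * (a (k + 1) * y ^ (k + 1)) :=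
          le_mul_of_one_le_left ((pow_pos hy_pos _).le.trans ih_k) hm
        _ = a m * a (k + 1) * y ^ (m + (k + 1) + 1) := by ring
        _ ≤ a (m + (k + 1) + 1) * y ^ (m + (k + 1) + 1) := by
          gcongr
          exact ha_mul m (k + 1)

namespace Term

/-- `IsSubterm s t` says that `s` occurs in `t`. The occurrence is literal: de Bruijn indices are
not adjusted when passing under an abstraction. -/
inductive IsSubterm (s : Term) : Term → Prop
  | refl : IsSubterm s s
  | appLeft {M : Term} (N : Term) : IsSubterm s M → IsSubterm s (.app M N)
  | appRight (M : Term) {N : Term} : IsSubterm s N → IsSubterm s (.app M N)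
  | abs {M : Term} : IsSubterm s M → IsSubterm s (.abs M)

theorem IsSubterm.size_le {s t : Term} (h : IsSubterm s t) : s.size ≤ t.size := by
  induction h with
  | refl => exact le_rfl
  | appLeft N _ ih => simp only [size]; lia
  | appRight M _ ih => simp only [size]; lia
  | abs _ ih => simp only [size]; lia

theorem StronglyNormalizing.of_map {f : Term → Term} (hf : ∀ {a b}, Beta a b → Beta (f a) (f b))
    {t : Term} (h : (f t).StronglyNormalizing) : t.StronglyNormalizing :=
  Subrelation.accessible hf (InvImage.accessible f h)

theorem StronglyNormalizing.of_isSubterm {s t : Term} (ht : t.StronglyNormalizing)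
    (hst : IsSubterm s t) : s.StronglyNormalizing := by
  induction hst with
  | refl => exact ht
  | appLeft N _ ih => exact ih (ht.of_map (f := (app · N)) (.appLeft N))
  | appRight M _ ih => exact ih (ht.of_map (f := app M) (.appRight M))
  | abs _ ih => exact ih (ht.of_map (f := abs) .abs)

/-- The self-application combinator `λx. x x`. -/
def selfApp : Term := .abs (.app (.var 0) (.var 0))

/-- The looping combinator `Ω = (λx. x x) (λx. x x)`. -/
def omega : Term := .app selfApp selfApp

theorem not_stronglyNormalizing_omega : ¬ omega.StronglyNormalizing :=
  not_acc_of_rel_self (Beta.beta (.app (.var 0) (.var 0)) selfApp)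

theorem StronglyNormalizing.not_isSubterm_omega {t : Term} (ht : t.StronglyNormalizing) :
    ¬ IsSubterm omega t :=
  fun h => not_stronglyNormalizing_omega (ht.of_isSubterm h)

/-- A term is a variable, an application or an abstraction. -/
def equivSum : ℕ ⊕ ((Term × Term) ⊕ Term) ≃ Term where
  toFun
    | .inl k => .var k
    | .inr (.inl p) => .app p.1 p.2
    | .inr (.inr M) => .abs M
  invFun
    | .var k => .inl k
    | .app M N => .inr (.inl (M, N))
    | .abs M => .inr (.inr M)
  left_inv := by rintro (k | p | M) <;> rfl
  right_inv := by rintro (k | ⟨M, N⟩ | M) <;> rfl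

theorem size_pos (t : Term) : 0 < t.size := by
  cases t <;> simp [size]

theorem finite_setOf_size_le (n : ℕ) : {t : Term | t.size ≤ n}.Finite := by
  induction n with
  | zero => exact Set.finite_empty.subset fun t ht => (size_pos t).not_ge ht
  | succ n ih =>
    refine (((Set.finite_le_nat n).image var).union
      (((ih.prod ih).image fun p => app p.1 p.2).union (ih.image abs))).subset ?_
    rintro (k | ⟨M, N⟩ | M) ht <;> simp only [size, Set.mem_ofPred_eq] at ht
    · exact .inl ⟨k, by simpa using ht, rfl⟩
    · exact .inr (.inl ⟨(M, N), ⟨show M.size ≤ n by lia, show N.size ≤ n by lia⟩, rfl⟩)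
    · exact .inr (.inr ⟨M, by simpa using ht, rfl⟩)

instance finite_size_eq (n : ℕ) : Finite {t : Term // t.size = n} :=
  (finite_setOf_size_le n).subset fun _ h => le_of_eq h

theorem one_le_L_succ (n : ℕ) : 1 ≤ L (n + 1) :=
  have : Nonempty {t : Term // t.size = n + 1} := ⟨⟨.var n, rfl⟩⟩
  Nat.card_pos

theorem L_mul_L_le (m n : ℕ) : L m * L n ≤ L (m + n + 1) := by
  unfold L
  rw [← Nat.card_prod]
  refine Nat.card_le_card_of_injective
    (fun p : {t : Term // t.size = m} × {t : Term // t.size = n} =>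
      (⟨.app p.1 p.2, by simp only [size, p.1.2, p.2.2]⟩ : {t : Term // t.size = m + n + 1})) ?_
  rintro ⟨⟨M, hM⟩, ⟨N, hN⟩⟩ ⟨⟨M', hM'⟩, ⟨N', hN'⟩⟩ h
  simpa using h

/-- The right-hand side `Φ x y` of the functional equation `F = Φ x F` of the generating function
of lambda terms: variables contribute `x + x² + ⋯ = x / (1 - x)`. -/
noncomputable def gfStep (x y : ℝ) : ℝ := x / (1 - x) + (x * (y * y) + x * y)

theorem gfStep_mono {x y z : ℝ} (hx : 0 ≤ x) (hy : 0 ≤ y) (hyz : y ≤ z) :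
    gfStep x y ≤ gfStep x z := by
  have hz : 0 ≤ z := hy.trans hyz
  unfold gfStep
  gcongr

theorem hasSum_pow_succ {x : ℝ} (hx : 0 ≤ x) (hx_lt : x < 1) :
    HasSum (fun k : ℕ => x ^ (k + 1)) (x / (1 - x)) := by
  simpa only [pow_succ', div_eq_mul_inv] using (hasSum_geometric_of_lt_one hx hx_lt).mul_left x

theorem sum_pow_size_le_gfStep {x : ℝ} (hx : 0 ≤ x) (hx_lt : x < 1) {U V : Finset Term}
    (happ : ∀ M N, app M N ∈ V → M ∈ U ∧ N ∈ U) (habs : ∀ M, abs M ∈ V → M ∈ U) :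
    ∑ t ∈ V, x ^ t.size ≤ gfStep x (∑ t ∈ U, x ^ t.size) := by
  have var_injective : Function.Injective var := fun _ _ h => var.inj h
  let K : Finset ℕ := V.preimage var var_injective.injOn
  have hV : V ⊆ (K.disjSum ((U ×ˢ U).disjSum U)).map equivSum.toEmbedding := by
    rintro t ht
    refine Finset.mem_map.2 ⟨equivSum.symm t, ?_, equivSum.apply_symm_apply t⟩
    rcases t with k | ⟨M, N⟩ | M
    · simpa [equivSum, K] using ht
    · simpa [equivSum] using happ M N ht
    · simpa [equivSum] using habs M ht
  calc ∑ t ∈ V, x ^ t.size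
      ≤ ∑ t ∈ (K.disjSum ((U ×ˢ U).disjSum U)).map equivSum.toEmbedding, x ^ t.size :=
        Finset.sum_le_sum_of_subset_of_nonneg hV fun t _ _ => by positivity
    _ = ∑ k ∈ K, x ^ (k + 1) + (x * ((∑ t ∈ U, x ^ t.size) * ∑ t ∈ U, x ^ t.size) +
          x * ∑ t ∈ U, x ^ t.size) := by
        rw [Finset.sum_map, Finset.sum_disjSum, Finset.sum_disjSum, Finset.sum_mul_sum,
          ← Finset.sum_product', Finset.mul_sum, Finset.mul_sum]
        simp only [equivSum, Equiv.coe_toEmbedding, Equiv.coe_fn_mk, size, pow_succ', pow_add]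
    _ ≤ gfStep x (∑ t ∈ U, x ^ t.size) := by
        unfold gfStep
        gcongr
        exact sum_le_hasSum K (fun k _ => by positivity) (hasSum_pow_succ hx hx_lt)

theorem eq_gfStep_of_hasSum {x F : ℝ} (hx : 0 ≤ x) (hx_lt : x < 1)
    (hF : HasSum (fun t : Term => x ^ t.size) F) : F = gfStep x F := by
  have hnonneg : 0 ≤ fun t : Term => x ^ t.size := fun t => pow_nonneg hx t.size
  have happ : HasSum (fun p : Term × Term => x ^ (app p.1 p.2).size) (x * (F * F)) := by
    simpa only [size, pow_succ', pow_add] using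
      (hasSum_mul_of_nonneg hF hF hnonneg hnonneg).mul_left x
  have habs : HasSum (fun t : Term => x ^ (abs t).size) (x * F) := by
    simpa only [size, pow_succ'] using hF.mul_left x
  have hsum : HasSum ((fun t : Term => x ^ t.size) ∘ equivSum) (gfStep x F) :=
    HasSum.sum (hasSum_pow_succ hx hx_lt) (HasSum.sum happ habs)
  exact hF.unique (equivSum.hasSum_iff.1 hsum)

theorem summable_pow_size_iff {x : ℝ} (hx : 0 ≤ x) :
    Summable (fun t : Term => x ^ t.size) ↔ Summable fun n => (L n : ℝ) * x ^ n := by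
  have hfiber (n : ℕ) (t : {t : Term // t.size = n}) :
      x ^ (Equiv.sigmaFiberEquiv size ⟨n, t⟩).size = x ^ n := congrArg (x ^ ·) t.2
  refine (Equiv.sigmaFiberEquiv size).summable_iff.symm.trans
    ((summable_sigma_of_nonneg fun _ => pow_nonneg hx _).trans ?_)
  simp only [hfiber, tsum_const, nsmul_eq_mul, L, Summable.of_finite,
    implies_true, true_and]

/-- `ρ` is the positive zero of the discriminant of the functional equation `F = gfStep ρ F`,
multiplied by `1 - ρ`. It is the radius of convergence of the generating function. -/
structure IsCritical (ρ : ℝ) : Prop where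
  pos : 0 < ρ
  disc_eq_zero : (1 - ρ) ^ 3 = 4 * ρ ^ 2

theorem exists_isCritical : ∃ ρ, IsCritical ρ := by
  have hcont : ContinuousOn (fun x : ℝ => 4 * x ^ 2 - (1 - x) ^ 3) (Set.Icc 0 1) := by fun_prop
  obtain ⟨ρ, hρ, hzero⟩ := intermediate_value_Ioo zero_le_one hcont
    (show (0 : ℝ) ∈ Set.Ioo _ _ by norm_num)
  exact ⟨ρ, hρ.1, by linarith only [hzero]⟩

namespace IsCritical

variable {ρ : ℝ}

theorem lt_one (hρ : IsCritical ρ) : ρ < 1 := by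
  have hcube : 0 < (1 - ρ) ^ 3 := hρ.disc_eq_zero ▸ mul_pos four_pos (pow_pos hρ.pos 2)
  exact sub_pos.1 ((odd_two_mul_add_one 1).pow_pos_iff.1 hcube)

theorem gfStep_eq (hρ : IsCritical ρ) :
    gfStep ρ ((1 - ρ) / (2 * ρ)) = (1 - ρ) / (2 * ρ) := by
  have hρ_pos := hρ.pos
  have hρ_lt : 0 < 1 - ρ := sub_pos.2 hρ.lt_one
  unfold gfStep
  field_simp
  linear_combination -hρ.disc_eq_zero

theorem lt_gfStep (hρ : IsCritical ρ) {x : ℝ} (hρx : ρ < x) (hx : x < 1) (y : ℝ) :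
    y < gfStep x y := by
  have hx_pos : 0 < x := hρ.pos.trans hρx
  have h1x : 0 < 1 - x := sub_pos.2 hx
  have hdisc : (1 - x) ^ 3 < 4 * x ^ 2 :=
    calc (1 - x) ^ 3 < (1 - ρ) ^ 3 := by gcongr
      _ = 4 * ρ ^ 2 := hρ.disc_eq_zero
      _ < 4 * x ^ 2 := by have := hρ.pos; gcongr
  have hsquare : gfStep x y - y =
      ((1 - x) * (2 * x * y - (1 - x)) ^ 2 + (4 * x ^ 2 - (1 - x) ^ 3)) / (4 * x * (1 - x)) := by
    unfold gfStep
    field_simp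
    ring
  have : 0 < gfStep x y - y := by
    rw [hsquare]
    have := sub_pos.2 hdisc
    positivity
  linarith

theorem not_summable (hρ : IsCritical ρ) {x : ℝ} (hρx : ρ < x) (hx : x < 1) :
    ¬ Summable fun n => (L n : ℝ) * x ^ n := by
  have hx_nonneg : 0 ≤ x := (hρ.pos.trans hρx).le
  rw [← summable_pow_size_iff hx_nonneg]
  rintro ⟨F, hF⟩
  exact (hρ.lt_gfStep hρx hx F).ne (eq_gfStep_of_hasSum hx_nonneg hx hF)

theorem exists_one_lt_L_mul_pow (hρ : IsCritical ρ) {y : ℝ} (hρy : ρ < y) (hy : y < 1) :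
    ∃ m, 1 < L m * y ^ (m + 1) := by
  by_contra! hle
  obtain ⟨x, hρx, hxy⟩ := exists_between hρy
  have hx_pos : 0 < x := hρ.pos.trans hρx
  have hy_pos : 0 < y := hx_pos.trans hxy
  refine hρ.not_summable hρx (hxy.trans hy) (Summable.of_nonneg_of_le (fun n => by positivity)
    (fun n => ?_) ((summable_geometric_of_lt_one (by positivity)
      ((div_lt_one hy_pos).2 hxy)).mul_left y⁻¹))
  calc (L n : ℝ) * x ^ n = L n * y ^ (n + 1) * (y⁻¹ * (x / y) ^ n) := by
        rw [div_pow, pow_succ]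
        field_simp
    _ ≤ 1 * (y⁻¹ * (x / y) ^ n) := by gcongr; exact hle n
    _ = y⁻¹ * (x / y) ^ n := one_mul _

theorem exists_le_L_mul_pow (hρ : IsCritical ρ) {y : ℝ} (hρy : ρ < y) (hy : y < 1) :
    ∃ c > 0, ∀ n, c ≤ L (n + 1) * y ^ (n + 1) := by
  have hy_pos : 0 < y := hρ.pos.trans hρy
  obtain ⟨m, hm⟩ := hρ.exists_one_lt_L_mul_pow hρy hy
  exact ⟨y ^ (m + 1), by positivity,
    pow_le_mul_pow_of_mul_le (a := fun n => L n) (fun n => mod_cast one_le_L_succ n)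
      (fun m n => mod_cast L_mul_L_le m n) hy_pos hy.le hm.le⟩

end IsCritical

/-- The finite set of terms of size at most `n`. -/
noncomputable def sizeLE (n : ℕ) : Finset Term := (finite_setOf_size_le n).toFinset

theorem mem_sizeLE {n : ℕ} {t : Term} : t ∈ sizeLE n ↔ t.size ≤ n :=
  Set.Finite.mem_toFinset _

open Classical in
/-- The finite set of terms of size at most `n` in which `s` does not occur. -/
noncomputable def avoiding (s : Term) (n : ℕ) : Finset Term := {t ∈ sizeLE n | ¬ IsSubterm s t}

theorem mem_avoiding {s t : Term} {n : ℕ} :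
    t ∈ avoiding s n ↔ t.size ≤ n ∧ ¬ IsSubterm s t := by
  simp only [avoiding, Finset.mem_filter, mem_sizeLE]

theorem self_notMem_avoiding (s : Term) (n : ℕ) : s ∉ avoiding s n :=
  fun h => (mem_avoiding.1 h).2 .refl

theorem card_avoiding_mul_pow_le_sum (s : Term) {x : ℝ} (hx : 0 ≤ x) {n N : ℕ} (hnN : n ≤ N) :
    Nat.card {t : Term // ¬ IsSubterm s t ∧ t.size = n} * x ^ n ≤
      ∑ t ∈ avoiding s N, x ^ t.size := by
  have hcard : Nat.card {t : Term // ¬ IsSubterm s t ∧ t.size = n} =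
      {t ∈ avoiding s N | t.size = n}.card :=
    Nat.subtype_card _ fun t => by
      rw [Finset.mem_filter, mem_avoiding]
      exact ⟨fun h => ⟨h.1.2, h.2⟩, fun h => ⟨⟨h.2.trans_le hnN, h.1⟩, h.2⟩⟩
  calc Nat.card {t : Term // ¬ IsSubterm s t ∧ t.size = n} * x ^ n
      = ∑ t ∈ avoiding s N with t.size = n, x ^ t.size := by
        rw [hcard, Finset.sum_congr rfl fun t ht => by rw [(Finset.mem_filter.1 ht).2],
          Finset.sum_const, nsmul_eq_mul]
    _ ≤ ∑ t ∈ avoiding s N, x ^ t.size :=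
        Finset.sum_le_sum_of_subset_of_nonneg (Finset.filter_subset _ _)
          fun t _ _ => by positivity

open Classical in
theorem mem_avoiding_of_mem_insert {s t u : Term} {n : ℕ} (hs : s.size ≤ n + 1)
    (ht : t ∈ insert s (avoiding s (n + 1))) (hsize : u.size < t.size)
    (hsub : IsSubterm s u → IsSubterm s t) : u ∈ avoiding s n := by
  rw [mem_avoiding]
  rcases Finset.mem_insert.1 ht with rfl | ht
  · exact ⟨by lia, fun h => h.size_le.not_gt hsize⟩
  · obtain ⟨ht_size, ht_avoid⟩ := mem_avoiding.1 ht
    exact ⟨by lia, mt hsub ht_avoid⟩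

open Classical in
theorem sum_avoiding_succ_add_le {s : Term} {x : ℝ} (hx : 0 ≤ x) (hx_lt : x < 1) {n : ℕ}
    (hs : s.size ≤ n + 1) :
    ∑ t ∈ avoiding s (n + 1), x ^ t.size + x ^ s.size ≤
      gfStep x (∑ t ∈ avoiding s n, x ^ t.size) := by
  -- The immediate subterms of `s` avoid `s`, so `gfStep` counts `s` along with the avoiding terms.
  calc ∑ t ∈ avoiding s (n + 1), x ^ t.size + x ^ s.size
      = ∑ t ∈ insert s (avoiding s (n + 1)), x ^ t.size := by
        rw [Finset.sum_insert (self_notMem_avoiding s (n + 1)), add_comm]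
    _ ≤ gfStep x (∑ t ∈ avoiding s n, x ^ t.size) :=
        sum_pow_size_le_gfStep hx hx_lt
          (fun M N h => ⟨mem_avoiding_of_mem_insert hs h (by simp only [size]; lia) (.appLeft N),
            mem_avoiding_of_mem_insert hs h (by simp only [size]; lia) (.appRight M)⟩)
          fun M h => mem_avoiding_of_mem_insert hs h (by simp only [size]; lia) .abs

theorem sum_avoiding_le_of_gfStep_le {s : Term} {x τ : ℝ} (hx : 0 ≤ x) (hx_lt : x < 1)
    (hbase : ∑ t ∈ avoiding s s.size, x ^ t.size ≤ τ) (hstep : gfStep x τ ≤ τ + x ^ s.size)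
    {n : ℕ} (hn : s.size ≤ n) : ∑ t ∈ avoiding s n, x ^ t.size ≤ τ := by
  induction n, hn using Nat.le_induction with
  | base => exact hbase
  | succ n hn ih =>
    refine le_of_add_le_add_right (a := x ^ s.size) ?_
    calc ∑ t ∈ avoiding s (n + 1), x ^ t.size + x ^ s.size
        ≤ gfStep x (∑ t ∈ avoiding s n, x ^ t.size) :=
          sum_avoiding_succ_add_le hx hx_lt (by lia)
      _ ≤ gfStep x τ := gfStep_mono hx (Finset.sum_nonneg fun t _ => by positivity) ih
      _ ≤ τ + x ^ s.size := hstep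

theorem sum_sizeLE_le_of_gfStep_le {x τ : ℝ} (hx : 0 ≤ x) (hx_lt : x < 1) (hτ : 0 ≤ τ)
    (hstep : gfStep x τ ≤ τ) (n : ℕ) : ∑ t ∈ sizeLE n, x ^ t.size ≤ τ := by
  induction n with
  | zero =>
    have hempty : sizeLE 0 = ∅ :=
      Finset.eq_empty_of_forall_notMem fun t ht => (size_pos t).not_ge (mem_sizeLE.1 ht)
    simpa only [hempty, Finset.sum_empty] using hτ
  | succ n ih =>
    calc ∑ t ∈ sizeLE (n + 1), x ^ t.size
        ≤ gfStep x (∑ t ∈ sizeLE n, x ^ t.size) := by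
          refine sum_pow_size_le_gfStep hx hx_lt (fun M N h => ?_) fun M h => ?_ <;>
          · simp only [mem_sizeLE, size] at h ⊢
            lia
      _ ≤ gfStep x τ := gfStep_mono hx (Finset.sum_nonneg fun t _ => by positivity) ih
      _ ≤ τ := hstep

open Classical in
theorem sum_avoiding_size_add_le_sum_sizeLE (s : Term) {x : ℝ} (hx : 0 ≤ x) :
    ∑ t ∈ avoiding s s.size, x ^ t.size + x ^ s.size ≤ ∑ t ∈ sizeLE s.size, x ^ t.size := by
  rw [add_comm, ← Finset.sum_insert (f := fun t => x ^ t.size) (self_notMem_avoiding s s.size)]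
  exact Finset.sum_le_sum_of_subset_of_nonneg
    (Finset.insert_subset (mem_sizeLE.2 le_rfl) (Finset.filter_subset _ _))
    fun t _ _ => by positivity

theorem IsCritical.sum_avoiding_size_lt {ρ : ℝ} (hρ : IsCritical ρ) (s : Term) :
    ∑ t ∈ avoiding s s.size, ρ ^ t.size < (1 - ρ) / (2 * ρ) := by
  have hρ_pos := hρ.pos
  have hρ_lt : 0 < 1 - ρ := sub_pos.2 hρ.lt_one
  calc ∑ t ∈ avoiding s s.size, ρ ^ t.size
      < ∑ t ∈ avoiding s s.size, ρ ^ t.size + ρ ^ s.size := lt_add_of_pos_right _ (by positivity)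
    _ ≤ ∑ t ∈ sizeLE s.size, ρ ^ t.size := sum_avoiding_size_add_le_sum_sizeLE s hρ_pos.le
    _ ≤ (1 - ρ) / (2 * ρ) :=
      sum_sizeLE_le_of_gfStep_le hρ_pos.le hρ.lt_one (by positivity) hρ.gfStep_eq.le _

theorem IsCritical.exists_card_avoiding_mul_pow_le {ρ : ℝ} (hρ : IsCritical ρ) (s : Term) :
    ∃ x, ρ < x ∧ x < 1 ∧ ∃ C : ℝ, ∀ n,
      Nat.card {t : Term // ¬ IsSubterm s t ∧ t.size = n} * x ^ n ≤ C := by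
  have hρ_pos := hρ.pos
  have hρ_lt : 0 < 1 - ρ := sub_pos.2 hρ.lt_one
  set τ : ℝ := (1 - ρ) / (2 * ρ)
  have hstep_ρ : gfStep ρ τ < τ + ρ ^ s.size := by
    rw [hρ.gfStep_eq]
    exact lt_add_of_pos_right _ (by positivity)
  have hbase : ∀ᶠ x in 𝓝 ρ, ∑ t ∈ avoiding s s.size, x ^ t.size < τ :=
    ContinuousAt.eventually_lt (by fun_prop) continuousAt_const (hρ.sum_avoiding_size_lt s)
  have hstep : ∀ᶠ x in 𝓝 ρ, gfStep x τ < τ + x ^ s.size := by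
    refine ContinuousAt.eventually_lt ?_ (by fun_prop) hstep_ρ
    unfold gfStep
    fun_prop (disch := exact hρ_lt.ne')
  obtain ⟨x, ⟨hbase_x, hstep_x, hx⟩, hρx⟩ :=
    ((hbase.and (hstep.and (eventually_lt_nhds hρ.lt_one))).filter_mono
      (nhdsWithin_le_nhds (s := Set.Ioi ρ)) |>.and self_mem_nhdsWithin).exists
  have hx_nonneg : 0 ≤ x := (hρ_pos.trans hρx).le
  exact ⟨x, hρx, hx, τ, fun n =>
    (card_avoiding_mul_pow_le_sum s hx_nonneg (Nat.le_add_left n s.size)).trans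
      (sum_avoiding_le_of_gfStep_le hx_nonneg hx hbase_x.le hstep_x.le (Nat.le_add_right _ n))⟩

theorem tendsto_card_avoiding_div_L (s : Term) :
    Tendsto (fun n => (Nat.card {t : Term // ¬ IsSubterm s t ∧ t.size = n} : ℝ) / L n)
      atTop (𝓝 0) := by
  obtain ⟨ρ, hρ⟩ := exists_isCritical
  obtain ⟨x, hρx, hx, C, hupper⟩ := hρ.exists_card_avoiding_mul_pow_le s
  obtain ⟨y, hρy, hyx⟩ := exists_between hρx
  obtain ⟨c, hc, hlower⟩ := hρ.exists_le_L_mul_pow hρy (hyx.trans hx)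
  have hy_pos : 0 < y := hρ.pos.trans hρy
  have hx_pos : 0 < x := hy_pos.trans hyx
  have hlim : Tendsto (fun n : ℕ => C / c * (y / x) ^ n) atTop (𝓝 0) := by
    simpa only [mul_zero] using (tendsto_pow_atTop_nhds_zero_of_lt_one (by positivity)
      ((div_lt_one hx_pos).2 hyx)).const_mul (C / c)
  refine squeeze_zero' (.of_forall fun n => by positivity) ?_ hlim
  filter_upwards [eventually_ge_atTop 1] with n hn
  obtain ⟨n, rfl⟩ := Nat.exists_eq_add_of_le' hn
  set A : ℝ := (Nat.card {t : Term // ¬ IsSubterm s t ∧ t.size = n + 1} : ℝ)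
  calc A / L (n + 1)
      = A * x ^ (n + 1) / (L (n + 1) * y ^ (n + 1)) * (y / x) ^ (n + 1) := by
        rw [div_pow]
        field_simp
    _ ≤ C / c * (y / x) ^ (n + 1) := by
      have hC : 0 ≤ C := le_trans (by positivity) (hupper (n + 1))
      gcongr
      · exact hupper (n + 1)
      · exact hlower n

theorem card_stronglyNormalizing_le_card_avoiding (n : ℕ) :
    Nat.card {t : Term // t.StronglyNormalizing ∧ t.size = n} ≤
      Nat.card {t : Term // ¬ IsSubterm omega t ∧ t.size = n} :=
  Nat.card_mono ((finite_setOf_size_le n).subset fun _ h => h.2.le)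
    fun _ h => ⟨h.1.not_isSubterm_omega, h.2⟩

end Term

theorem density_stronglyNormalizing_zero :
    Filter.Tendsto
      (fun n : ℕ =>
        (Nat.card {t : Term // t.StronglyNormalizing ∧ t.size = n} : ℝ) / (L n : ℝ))
      Filter.atTop (nhds 0) := by
  refine squeeze_zero (fun n => by positivity) (fun n => ?_)
    (Term.tendsto_card_avoiding_div_L Term.omega)
  gcongr
  exact Term.card_stronglyNormalizing_le_card_avoiding n
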